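/- No polynomial computes the majority vote of three reals: there is no polynomial p ∈ ℝ[x,y,z] such that p(x,x,z) = x for all x,z ∈ ℝ, p(x,y,x) = x for all x,y ∈ ℝ, and p(x,y,y) = y for all x,y ∈ ℝ. -/

import Mathlib

open MvPolynomial

/-!
A polynomial function is differentiable at the origin, with a linear derivative `L`. The majority
identities make `p` vanish on the first two coordinate axes, so `L e₀ = L e₁ = 0`, while
`p (t, t, 0) = t` forces `L (e₀ + e₁) = 1`, contradicting additivity of `L`.
-/

/-- **No polynomial computes the majority vote of three reals:** there is no polynomial
`p ∈ ℝ[x,y,z]` with `p(x,x,z) = x`, `p(x,y,x) = x` and `p(x,y,y) = y` for all reals. -/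
theorem no_polynomial_majority_vote :
    ¬ ∃ p : MvPolynomial (Fin 3) ℝ,
        (∀ x z : ℝ, eval ![x, x, z] p = x) ∧
        (∀ x y : ℝ, eval ![x, y, x] p = x) ∧
        (∀ x y : ℝ, eval ![x, y, y] p = y) := by
  rintro ⟨p, h₁, h₂, h₃⟩
  have hd : DifferentiableAt ℝ (fun v : Fin 3 → ℝ => eval v p) 0 :=
    (AnalyticOnNhd.eval_mvPolynomial p 0 (Set.mem_univ _)).differentiableAt
  set L := fderiv ℝ (fun v : Fin 3 → ℝ => eval v p) 0
  have hline (v : Fin 3 → ℝ) : HasDerivAt (fun t : ℝ => eval (t • v) p) (L v) 0 := by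
    simpa [HasLineDerivAt] using hd.hasFDerivAt.hasLineDerivAt v
  have e₀ : L ![1, 0, 0] = 0 := by
    have h := hline ![1, 0, 0]
    simp only [Matrix.smul_cons, smul_eq_mul, mul_one, mul_zero, Matrix.smul_empty, h₃] at h
    exact h.unique (hasDerivAt_const _ _)
  have e₁ : L ![0, 1, 0] = 0 := by
    have h := hline ![0, 1, 0]
    simp only [Matrix.smul_cons, smul_eq_mul, mul_one, mul_zero, Matrix.smul_empty, h₂] at h
    exact h.unique (hasDerivAt_const _ _)
  have e₀₁ : L ![1, 1, 0] = 1 := by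
    have h := hline ![1, 1, 0]
    simp only [Matrix.smul_cons, smul_eq_mul, mul_one, mul_zero, Matrix.smul_empty, h₁] at h
    exact h.unique (hasDerivAt_id _)
  have hsum : (![1, 1, 0] : Fin 3 → ℝ) = ![1, 0, 0] + ![0, 1, 0] := by simp
  rw [hsum, map_add, e₀, e₁] at e₀₁
  norm_num at e₀₁
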